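/- Let X and Y be measurable spaces, let P and Q be probability measures on X with P absolutely continuous with respect to Q, and let κ be a Markov kernel from X to Y. Write P' = P.bind κ and Q' = Q.bind κ for the images of P and Q under κ. Then for every real λ ≥ 1, ∫ ((dP'/dQ')(y))^λ dQ'(y) ≤ ∫ ((dP/dQ)(x))^λ dQ(x), where dP/dQ denotes the Radon–Nikodym derivative (a [0,∞]-valued function) and the integrals are Lebesgue integrals of [0,∞]-valued functions. Equivalently, the order-λ Rényi moment (and hence the Rényi divergence) cannot increase under post-processing by a Markov kernel. -/

import Mathlib

open MeasureTheory ProbabilityTheory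
open scoped ENNReal

/-!
Write `f = dP/dQ`, `g = dP'/dQ'` and `h = min g n`. Since `x ↦ x ^ p` lies above its tangent line
at `h y`, we have `p * (f x * h y ^ (p - 1)) ≤ f x ^ p + (p - 1) * h y ^ p`. Integrating against
`κ x (dy) Q (dx)` gives `p * ∫ h ^ (p - 1) dP' ≤ ∫ f ^ p dQ + (p - 1) * ∫ h ^ p dQ'`, while `h ≤ g`
gives `∫ h ^ p dQ' ≤ ∫ h ^ (p - 1) dP'`. As `h` is bounded and `P'` is finite, both integrals of `h`
are finite, so `∫ h ^ p dQ' ≤ ∫ f ^ p dQ`; then let `n → ∞`.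
-/

lemma ofReal_mul_mul_rpow_sub_one_le {p : ℝ} (hp : 1 ≤ p) (a b : ℝ≥0∞) :
    ENNReal.ofReal p * (a * b ^ (p - 1)) ≤ a ^ p + ENNReal.ofReal (p - 1) * b ^ p := by
  rcases hp.eq_or_lt with rfl | hp
  · simp
  set q := p.conjExponent
  have hpq : p.HolderConjugate q := .conjExponent hp
  have conj_rpow : (b ^ (p - 1)) ^ q = b ^ p := by
    rw [← ENNReal.rpow_mul, hpq.sub_one_mul_conj]
  have conj_weight : ENNReal.ofReal p / ENNReal.ofReal q = ENNReal.ofReal (p - 1) := by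
    rw [← ENNReal.ofReal_div_of_pos hpq.symm.pos, hpq.div_conj_eq_sub_one]
  have ofReal_p_ne_zero : ENNReal.ofReal p ≠ 0 := (ENNReal.ofReal_pos.2 hpq.pos).ne'
  calc ENNReal.ofReal p * (a * b ^ (p - 1))
      ≤ ENNReal.ofReal p * (a ^ p / ENNReal.ofReal p + b ^ p / ENNReal.ofReal q) := by
        gcongr
        exact conj_rpow ▸ ENNReal.young_inequality a (b ^ (p - 1)) hpq
    _ = a ^ p + ENNReal.ofReal (p - 1) * b ^ p := by
        rw [mul_add, ENNReal.mul_div_cancel ofReal_p_ne_zero ENNReal.ofReal_ne_top,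
          ← conj_weight, ENNReal.mul_comm_div]

section RnDeriv

variable {X : Type*} [MeasurableSpace X] {μ ν : Measure X} {p : ℝ}

lemma lintegral_rpow_le_of_forall_min_natCast {g : X → ℝ≥0∞} {C : ℝ≥0∞} (hg : AEMeasurable g μ)
    (hp : 0 ≤ p) (hC : ∀ n : ℕ, ∫⁻ x, min (g x) n ^ p ∂μ ≤ C) : ∫⁻ x, g x ^ p ∂μ ≤ C := by
  refine le_of_tendsto' (lintegral_tendsto_of_tendsto_of_monotone
    (fun n ↦ (hg.min aemeasurable_const).pow_const p) (ae_of_all μ fun x ↦ ?_)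
    (ae_of_all μ fun x ↦ ?_)) hC
  · exact fun m n hmn ↦ by dsimp only; gcongr
  · have tendsto_truncation := (tendsto_const_nhds (x := g x)).min ENNReal.tendsto_nat_nhds_top
    rw [min_eq_left le_top] at tendsto_truncation
    exact (ENNReal.continuous_rpow_const.tendsto (g x)).comp tendsto_truncation

lemma lintegral_rpow_le_lintegral_rpow_sub_one_of_le_rnDeriv {h : X → ℝ≥0∞} (hh : AEMeasurable h ν)
    (hle : h ≤ᵐ[ν] μ.rnDeriv ν) (hp : 1 ≤ p) :
    ∫⁻ x, h x ^ p ∂ν ≤ ∫⁻ x, h x ^ (p - 1) ∂μ := by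
  have rpow_eq (x : X) : h x ^ p = h x * h x ^ (p - 1) := by
    simpa using ENNReal.rpow_add_of_nonneg (x := h x) 1 (p - 1) zero_le_one (sub_nonneg.2 hp)
  calc ∫⁻ x, h x ^ p ∂ν
      ≤ ∫⁻ x, μ.rnDeriv ν x * h x ^ (p - 1) ∂ν := by
        simp only [rpow_eq]
        exact lintegral_mono_ae (hle.mono fun _ hx ↦ by gcongr)
    _ = ∫⁻ x, h x ^ (p - 1) ∂ν.withDensity (μ.rnDeriv ν) :=
        (lintegral_withDensity_eq_lintegral_mul₀ (Measure.measurable_rnDeriv μ ν).aemeasurable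
          (hh.pow_const _)).symm
    _ ≤ ∫⁻ x, h x ^ (p - 1) ∂μ := lintegral_mono' (Measure.withDensity_rnDeriv_le μ ν) le_rfl

lemma lintegral_rpow_ne_top_of_ae_le [IsFiniteMeasure μ] {h : X → ℝ≥0∞} {c : ℝ≥0∞}
    (hc : c ≠ ∞) (hle : ∀ᵐ x ∂μ, h x ≤ c) (hp : 0 ≤ p) : ∫⁻ x, h x ^ p ∂μ ≠ ∞ := by
  have integral_le : ∫⁻ x, h x ^ p ∂μ ≤ ∫⁻ _, c ^ p ∂μ :=
    lintegral_mono_ae (hle.mono fun _ hx ↦ ENNReal.rpow_le_rpow hx hp)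
  refine ne_top_of_le_ne_top ?_ integral_le
  rw [lintegral_const]
  exact ENNReal.mul_ne_top (ENNReal.rpow_ne_top_of_nonneg hp hc) (measure_ne_top μ _)

lemma lintegral_rnDeriv_rpow_le_of_forall [IsFiniteMeasure μ] {C : ℝ≥0∞} (hp : 1 ≤ p)
    (hC : ∀ h : X → ℝ≥0∞, Measurable h →
      ENNReal.ofReal p * ∫⁻ x, h x ^ (p - 1) ∂μ ≤
        C + ENNReal.ofReal (p - 1) * ∫⁻ x, h x ^ p ∂ν) :
    ∫⁻ x, μ.rnDeriv ν x ^ p ∂ν ≤ C := by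
  have hp₀ : 0 ≤ p - 1 := sub_nonneg.2 hp
  refine lintegral_rpow_le_of_forall_min_natCast (Measure.measurable_rnDeriv μ ν).aemeasurable
    (zero_le_one.trans hp) fun n ↦ ?_
  set h : X → ℝ≥0∞ := fun x ↦ min (μ.rnDeriv ν x) n
  have hh : Measurable h := (Measure.measurable_rnDeriv μ ν).min measurable_const
  set I := ∫⁻ x, h x ^ p ∂ν
  have I_le : I ≤ ∫⁻ x, h x ^ (p - 1) ∂μ :=
    lintegral_rpow_le_lintegral_rpow_sub_one_of_le_rnDeriv hh.aemeasurable
      (ae_of_all ν fun x ↦ min_le_left _ _) hp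
  have I_ne_top : I ≠ ∞ :=
    ne_top_of_le_ne_top (lintegral_rpow_ne_top_of_ae_le (ENNReal.natCast_ne_top n)
      (ae_of_all μ fun x ↦ min_le_right _ _) hp₀) I_le
  have add_mul_I_le : I + ENNReal.ofReal (p - 1) * I ≤ C + ENNReal.ofReal (p - 1) * I :=
    calc I + ENNReal.ofReal (p - 1) * I
        = ENNReal.ofReal p * I := by
          rw [← one_add_mul, ← ENNReal.ofReal_one, ← ENNReal.ofReal_add zero_le_one hp₀,
            add_sub_cancel]
      _ ≤ ENNReal.ofReal p * ∫⁻ x, h x ^ (p - 1) ∂μ := by gcongr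
      _ ≤ C + ENNReal.ofReal (p - 1) * I := hC h hh
  exact ENNReal.le_of_add_le_add_right (ENNReal.mul_ne_top ENNReal.ofReal_ne_top I_ne_top)
    add_mul_I_le

end RnDeriv

section Kernel

variable {X Y : Type*} [MeasurableSpace X] [MeasurableSpace Y] {p : ℝ} {κ : Kernel X Y}

lemma ofReal_mul_lintegral_bind_withDensity_rpow_sub_one_le (μ : Measure X)
    (hκ : ∀ x, κ x Set.univ ≤ 1) (hp : 1 ≤ p) {f : X → ℝ≥0∞} (hf : Measurable f)
    {h : Y → ℝ≥0∞} (hh : Measurable h) :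
    ENNReal.ofReal p * ∫⁻ y, h y ^ (p - 1) ∂(μ.withDensity f).bind κ ≤
      ∫⁻ x, f x ^ p ∂μ + ENNReal.ofReal (p - 1) * ∫⁻ y, h y ^ p ∂μ.bind κ := by
  have hh_pow (r : ℝ) : Measurable fun y ↦ h y ^ r := hh.pow_const r
  have fiber_le (x : X) : ENNReal.ofReal p * (f x * ∫⁻ y, h y ^ (p - 1) ∂κ x) ≤
      f x ^ p + ENNReal.ofReal (p - 1) * ∫⁻ y, h y ^ p ∂κ x :=
    calc ENNReal.ofReal p * (f x * ∫⁻ y, h y ^ (p - 1) ∂κ x)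
        = ∫⁻ y, ENNReal.ofReal p * (f x * h y ^ (p - 1)) ∂κ x := by
          rw [lintegral_const_mul _ ((hh_pow _).const_mul _), lintegral_const_mul _ (hh_pow _)]
      _ ≤ ∫⁻ y, (f x ^ p + ENNReal.ofReal (p - 1) * h y ^ p) ∂κ x :=
          lintegral_mono fun y ↦ ofReal_mul_mul_rpow_sub_one_le hp (f x) (h y)
      _ = f x ^ p * κ x Set.univ + ENNReal.ofReal (p - 1) * ∫⁻ y, h y ^ p ∂κ x := by
          rw [lintegral_add_left measurable_const, lintegral_const,
            lintegral_const_mul _ (hh_pow _)]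
      _ ≤ f x ^ p + ENNReal.ofReal (p - 1) * ∫⁻ y, h y ^ p ∂κ x := by
          gcongr
          exact mul_le_of_le_one_right' (hκ x)
  calc ENNReal.ofReal p * ∫⁻ y, h y ^ (p - 1) ∂(μ.withDensity f).bind κ
      = ∫⁻ x, ENNReal.ofReal p * (f x * ∫⁻ y, h y ^ (p - 1) ∂κ x) ∂μ := by
        rw [Measure.lintegral_bind κ.aemeasurable (hh_pow _).aemeasurable,
          lintegral_withDensity_eq_lintegral_mul _ hf (hh_pow _).lintegral_kernel,
          ← lintegral_const_mul _ (hf.mul (hh_pow _).lintegral_kernel)]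
        rfl
    _ ≤ ∫⁻ x, (f x ^ p + ENNReal.ofReal (p - 1) * ∫⁻ y, h y ^ p ∂κ x) ∂μ :=
        lintegral_mono fiber_le
    _ = ∫⁻ x, f x ^ p ∂μ + ENNReal.ofReal (p - 1) * ∫⁻ y, h y ^ p ∂μ.bind κ := by
        rw [lintegral_add_left (hf.pow_const p), Measure.lintegral_bind κ.aemeasurable
          (hh_pow _).aemeasurable, lintegral_const_mul _ (hh_pow _).lintegral_kernel]

end Kernel

theorem renyi_data_processing_general
    {X Y : Type*} [MeasurableSpace X] [MeasurableSpace Y]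
    (P Q : Measure X) [IsFiniteMeasure P] [P.HaveLebesgueDecomposition Q]
    (hPQ : P ≪ Q) (κ : Kernel X Y) (hκ : ∀ x, κ x Set.univ ≤ 1)
    (lam : ℝ) (hlam : 1 ≤ lam) :
    ∫⁻ y, (Measure.rnDeriv (P.bind κ) (Q.bind κ) y) ^ lam ∂(Q.bind κ)
      ≤ ∫⁻ x, (Measure.rnDeriv P Q x) ^ lam ∂Q := by
  have : IsFiniteKernel κ := ⟨1, ENNReal.one_lt_top, hκ⟩
  refine lintegral_rnDeriv_rpow_le_of_forall hlam fun h hh ↦ ?_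
  have young_bound := ofReal_mul_lintegral_bind_withDensity_rpow_sub_one_le Q hκ hlam
    (Measure.measurable_rnDeriv P Q) hh
  rwa [Measure.withDensity_rnDeriv_eq P Q hPQ] at young_bound

/-- **Data processing inequality for Rényi moments.**
For probability measures `P ≪ Q` on `X` and a Markov kernel `κ : X → Y`, with
`P' = P.bind κ` and `Q' = Q.bind κ`, for every real `λ ≥ 1`:
`∫ (dP'/dQ')^λ dQ' ≤ ∫ (dP/dQ)^λ dQ`; hence the order-`λ` Rényi divergence cannot
increase under post-processing by a Markov kernel. -/
theorem renyi_data_processing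
    {X Y : Type*} [MeasurableSpace X] [MeasurableSpace Y]
    (P Q : Measure X) [IsProbabilityMeasure P] [IsProbabilityMeasure Q]
    (hPQ : P ≪ Q) (κ : Kernel X Y) [IsMarkovKernel κ]
    (lam : ℝ) (hlam : 1 ≤ lam) :
    ∫⁻ y, (Measure.rnDeriv (P.bind κ) (Q.bind κ) y) ^ lam ∂(Q.bind κ)
      ≤ ∫⁻ x, (Measure.rnDeriv P Q x) ^ lam ∂Q :=
  renyi_data_processing_general P Q hPQ κ (fun _ ↦ prob_le_one) lam hlam
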